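/- arXiv:1808.04199 — 3 statements merged into one kernel-verified Lean document; each statement's English description precedes it below -/
import Mathlib

section
/- Let π be a permutation. Then (1) π contains the pattern 231 if and only if π has a down oriented separated pair, and (2) π contains the pattern 132 if and only if π has an up oriented separated pair. -/
/-!  Common definitions: permutation patterns, separated pairs, rev-tier. -/

/-- `π` contains the pattern `σ`. -/
def Pattern.Contains {n k : ℕ} (π : Equiv.Perm (Fin n)) (σ : Equiv.Perm (Fin k)) : Prop :=
  ∃ α : Fin k → Fin n, StrictMono α ∧ ∀ i j : Fin k, (π (α i) < π (α j) ↔ σ i < σ j)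

/-- `π` avoids the pattern `σ`. -/
def Pattern.Avoids {n k : ℕ} (π : Equiv.Perm (Fin n)) (σ : Equiv.Perm (Fin k)) : Prop :=
  ¬ Pattern.Contains π σ

/-- The pair of values `(a, a+1)` (0-indexed) is an up oriented separated pair in `σ`:
`a` precedes `a+1` and some value `> a+1` occurs strictly between them. -/
def UpSepPair {n : ℕ} (σ : Equiv.Perm (Fin n)) (a : Fin n) : Prop :=
  ∃ hb : (a : ℕ) + 1 < n,
    σ.symm a < σ.symm ⟨(a : ℕ) + 1, hb⟩ ∧
    ∃ p : Fin n, σ.symm a < p ∧ p < σ.symm ⟨(a : ℕ) + 1, hb⟩ ∧ (a : ℕ) + 1 < (σ p : ℕ)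

/-- The pair of values `(a, a+1)` (0-indexed) is a down oriented separated pair in `σ`. -/
def DownSepPair {n : ℕ} (σ : Equiv.Perm (Fin n)) (a : Fin n) : Prop :=
  ∃ hb : (a : ℕ) + 1 < n,
    σ.symm ⟨(a : ℕ) + 1, hb⟩ < σ.symm a ∧
    ∃ p : Fin n, σ.symm ⟨(a : ℕ) + 1, hb⟩ < p ∧ p < σ.symm a ∧ (a : ℕ) + 1 < (σ p : ℕ)

/-- `(a, a+1)` is a separated pair (of either orientation). -/
def SepPair {n : ℕ} (σ : Equiv.Perm (Fin n)) (a : Fin n) : Prop :=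
  UpSepPair σ a ∨ DownSepPair σ a

/-- `σ` has no separated pairs. -/
def NoSepPairs {n : ℕ} (σ : Equiv.Perm (Fin n)) : Prop :=
  ∀ a : Fin n, ¬ SepPair σ a

/-- `f` lists the lower values of an increasing sequence of separated pairs in `σ` with
alternating orientations; the first pair is down oriented iff `firstDown = true`. -/
def AltChain {n : ℕ} (σ : Equiv.Perm (Fin n)) (firstDown : Bool) {t : ℕ}
    (f : Fin t → Fin n) : Prop :=
  StrictMono f ∧ ∀ j : Fin t,
    if ((j : ℕ) % 2 = 0) ↔ (firstDown = true) then DownSepPair σ (f j)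
    else UpSepPair σ (f j)

/-- The rev-tier of `σ`: the maximal length of an increasing sequence of separated pairs
with alternating orientations beginning with a down oriented pair. -/
noncomputable def revTier {n : ℕ} (σ : Equiv.Perm (Fin n)) : ℕ :=
  sSup {t : ℕ | ∃ f : Fin t → Fin n, AltChain σ true f}

/-- Maximal length of an increasing alternating sequence of separated pairs (either
starting orientation). -/
noncomputable def maxAltLen {n : ℕ} (σ : Equiv.Perm (Fin n)) : ℕ :=
  sSup {t : ℕ | ∃ b : Bool, ∃ f : Fin t → Fin n, AltChain σ b f}

/-- `σ` has a separated pair and every maximum-length increasing alternating sequence of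
separated pairs begins with an up oriented pair. -/
def UpOriented {n : ℕ} (σ : Equiv.Perm (Fin n)) : Prop :=
  1 ≤ maxAltLen σ ∧ ¬ ∃ f : Fin (maxAltLen σ) → Fin n, AltChain σ true f

/-- `σ` has a separated pair and every maximum-length increasing alternating sequence of
separated pairs begins with a down oriented pair. -/
def DownOriented {n : ℕ} (σ : Equiv.Perm (Fin n)) : Prop :=
  1 ≤ maxAltLen σ ∧ ¬ ∃ f : Fin (maxAltLen σ) → Fin n, AltChain σ false f

/-- `σ` is a basis element of the class of permutations of rev-tier at most `t`. -/
def IsBasisElt (t : ℕ) {n : ℕ} (σ : Equiv.Perm (Fin n)) : Prop :=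
  t + 1 ≤ revTier σ ∧
  ∀ (m : ℕ) (τ : Equiv.Perm (Fin m)), m < n → Pattern.Contains σ τ → revTier τ ≤ t

/-- The entry `1` of `σ` is in (1-indexed) position `k`. -/
def onePos {n : ℕ} (σ : Equiv.Perm (Fin n)) (k : ℕ) : Prop :=
  ∀ h : 0 < n, (σ.symm ⟨0, h⟩ : ℕ) + 1 = k

/-- `η(n,k)`: number of permutations of length `n` with no separated pairs and entry `1`
in position `k`. -/
noncomputable def eta (n k : ℕ) : ℕ :=
  Nat.card {σ : Equiv.Perm (Fin n) // NoSepPairs σ ∧ onePos σ k}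

/-- `η(n)`: number of permutations of length `n` with no separated pairs. -/
noncomputable def etaTot (n : ℕ) : ℕ :=
  Nat.card {σ : Equiv.Perm (Fin n) // NoSepPairs σ}

/-- `μ_U(n,t,k)`: number of up-oriented permutations of length `n`, rev-tier `t`, with
entry `1` in position `k`. -/
noncomputable def muU (n t k : ℕ) : ℕ :=
  Nat.card {σ : Equiv.Perm (Fin n) // UpOriented σ ∧ revTier σ = t ∧ onePos σ k}

/-- `μ_D(n,t,k)`: number of down-oriented permutations of length `n`, rev-tier `t`, with
entry `1` in position `k`. -/
noncomputable def muD (n t k : ℕ) : ℕ :=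
  Nat.card {σ : Equiv.Perm (Fin n) // DownOriented σ ∧ revTier σ = t ∧ onePos σ k}

/-- `π` is a down-up alternating permutation: `π₁ > π₂ < π₃ > ⋯`. -/
def DownUp {n : ℕ} (π : Equiv.Perm (Fin n)) : Prop :=
  ∀ (i : ℕ) (h : i + 1 < n),
    if i % 2 = 0 then π ⟨i + 1, h⟩ < π ⟨i, by omega⟩
    else π ⟨i, by omega⟩ < π ⟨i + 1, h⟩

/-- The Entringer number `E_{n,k}`: down-up alternating permutations of length `n` whose
first entry is `k` (1-indexed value). -/
noncomputable def entringer (n k : ℕ) : ℕ :=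
  Nat.card {π : Equiv.Perm (Fin n) // DownUp π ∧ ∀ h : 0 < n, (π ⟨0, h⟩ : ℕ) + 1 = k}

/-- The reversal of a permutation: `(revP σ) j = σ (n + 1 - j)`. -/
def revP {n : ℕ} (σ : Equiv.Perm (Fin n)) : Equiv.Perm (Fin n) :=
  (Fin.revPerm).trans σ

/-- The explicit maximal rev-tier permutation of length `n` (0-indexed values):
the even entries of `{1,…,n}` in decreasing order, then `n`, then the odd entries in
increasing order. -/
def maxPermVal (n : ℕ) (i : Fin n) : Fin n :=
  if h1 : (i : ℕ) < (n - 1) / 2 then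
    ⟨2 * ((n - 1) / 2) - 2 * (i : ℕ) - 1, by omega⟩
  else if h2 : (i : ℕ) = (n - 1) / 2 then
    ⟨n - 1, by have := i.isLt; omega⟩
  else
    ⟨2 * ((i : ℕ) - (n - 1) / 2 - 1), by have := i.isLt; omega⟩

def p231 : Equiv.Perm (Fin 3) :=
  ⟨![1, 2, 0], ![2, 0, 1], by decide, by decide⟩

def p132 : Equiv.Perm (Fin 3) :=
  ⟨![0, 2, 1], ![0, 2, 1], by decide, by decide⟩

def p2413 : Equiv.Perm (Fin 4) :=
  ⟨![1, 3, 0, 2], ![2, 0, 3, 1], by decide, by decide⟩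

def p2431 : Equiv.Perm (Fin 4) :=
  ⟨![1, 3, 2, 0], ![3, 0, 2, 1], by decide, by decide⟩

def p23154 : Equiv.Perm (Fin 5) :=
  ⟨![1, 2, 0, 4, 3], ![2, 0, 1, 4, 3], by decide, by decide⟩

def p24153 : Equiv.Perm (Fin 5) :=
  ⟨![1, 3, 0, 4, 2], ![2, 0, 4, 1, 3], by decide, by decide⟩

def p24513 : Equiv.Perm (Fin 5) :=
  ⟨![1, 3, 4, 0, 2], ![3, 0, 4, 1, 2], by decide, by decide⟩

def p24531 : Equiv.Perm (Fin 5) :=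
  ⟨![1, 3, 4, 2, 0], ![4, 0, 3, 1, 2], by decide, by decide⟩

def p42513 : Equiv.Perm (Fin 5) :=
  ⟨![3, 1, 4, 0, 2], ![3, 1, 4, 0, 2], by decide, by decide⟩

def p42531 : Equiv.Perm (Fin 5) :=
  ⟨![3, 1, 4, 2, 0], ![4, 1, 3, 0, 2], by decide, by decide⟩

def p231564 : Equiv.Perm (Fin 6) :=
  ⟨![1, 2, 0, 4, 5, 3], ![2, 0, 1, 5, 3, 4], by decide, by decide⟩

def p261453 : Equiv.Perm (Fin 6) :=
  ⟨![1, 5, 0, 3, 4, 2], ![2, 0, 5, 3, 4, 1], by decide, by decide⟩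

def p523164 : Equiv.Perm (Fin 6) :=
  ⟨![4, 1, 2, 0, 5, 3], ![3, 1, 2, 5, 0, 4], by decide, by decide⟩

def p562413 : Equiv.Perm (Fin 6) :=
  ⟨![4, 5, 1, 3, 0, 2], ![4, 2, 5, 3, 0, 1], by decide, by decide⟩

def p562431 : Equiv.Perm (Fin 6) :=
  ⟨![4, 5, 1, 3, 2, 0], ![5, 2, 4, 3, 0, 1], by decide, by decide⟩

def p6723154 : Equiv.Perm (Fin 7) :=
  ⟨![5, 6, 1, 2, 0, 4, 3], ![4, 2, 3, 6, 5, 0, 1], by decide, by decide⟩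

def p4321 : Equiv.Perm (Fin 4) :=
  ⟨![3, 2, 1, 0], ![3, 2, 1, 0], by decide, by decide⟩

def p4213 : Equiv.Perm (Fin 4) :=
  ⟨![3, 1, 0, 2], ![2, 1, 3, 0], by decide, by decide⟩

/-!
A separated pair together with the larger value between its two members is an occurrence of 231
or 132. Conversely, let a value `π p` lie, in position, between two smaller values `x < y`. No value
in `[x, y]` occurs at position `p`, so each occurs strictly to the left or strictly to the right of
it. As `x` and `y` lie on opposite sides, some consecutive values `a`, `a + 1` in `[x, y]` do too,
on the same sides as `x` and `y` respectively. That pair is separated by `π p` and has the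
orientation of `(x, y)`. The two orientations are exchanged by reversing the order of positions.
-/

section Crossing

variable {α ι : Type*} [PartialOrder α] [LocallyFiniteOrder α] [LinearOrder ι]

theorem exists_covBy_lt_lt_of_forall_ne {f : α → ι} {p : ι} {x y : α} (hxy : x ≤ y)
    (hne : ∀ v ∈ Set.Icc x y, f v ≠ p) (hx : f x < p) (hy : p < f y) :
    ∃ a b, a ⋖ b ∧ b ≤ y ∧ f a < p ∧ p < f b := by
  have hfin : {v ∈ Set.Icc x y | f v < p}.Finite := (Set.finite_Icc x y).sep _
  obtain ⟨a, hxa, ha⟩ := hfin.exists_le_maximal ⟨Set.left_mem_Icc.2 hxy, hx⟩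
  obtain ⟨⟨-, hay_le⟩, hap⟩ := ha.prop
  have hay : a < y := hay_le.lt_of_ne (by rintro rfl; exact hap.not_gt hy)
  obtain ⟨b, hab, hby⟩ := exists_covBy_le_of_lt hay
  have hb : b ∈ Set.Icc x y := ⟨hxa.trans hab.le, hby⟩
  have hpb : p ≤ f b := not_lt.1 fun hbp => ha.not_prop_of_gt hab.lt ⟨hb, hbp⟩
  exact ⟨a, b, hab, hby, hap, hpb.lt_of_ne' (hne b hb)⟩

theorem exists_lt_straddling_iff_exists_covBy (e : ι ≃ α) :
    (∃ x y p, x < y ∧ e.symm x < p ∧ p < e.symm y ∧ y < e p) ↔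
      ∃ a b p, a ⋖ b ∧ e.symm a < p ∧ p < e.symm b ∧ b < e p := by
  constructor
  · rintro ⟨x, y, p, hxy, hxp, hpy, hy⟩
    have hne : ∀ v ∈ Set.Icc x y, e.symm v ≠ p := by
      rintro v hv rfl
      exact (hv.2.trans_lt hy).ne (e.apply_symm_apply v).symm
    obtain ⟨a, b, hab, hby, hap, hpb⟩ := exists_covBy_lt_lt_of_forall_ne hxy.le hne hxp hpy
    exact ⟨a, b, p, hab, hap, hpb, hby.trans_lt hy⟩
  · rintro ⟨a, b, p, hab, h⟩
    exact ⟨a, b, p, hab.lt, h⟩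

end Crossing

section Patterns

variable {n k : ℕ} (π : Equiv.Perm (Fin n))

theorem Pattern.contains_iff_exists_strictMono (σ : Equiv.Perm (Fin k)) :
    Pattern.Contains π σ ↔ ∃ α : Fin k → Fin n, StrictMono α ∧ StrictMono (π ∘ α ∘ σ.symm) := by
  refine exists_congr fun α => and_congr_right fun _ => ⟨fun h i j hij => ?_, fun h i j => ?_⟩
  · simpa [h] using hij
  · simpa using h.lt_iff_lt (a := σ i) (b := σ j)

theorem Pattern.contains_p231_iff :
    Pattern.Contains π p231 ↔
      ∃ x y p, x < y ∧ p < π.symm x ∧ π.symm y < p ∧ y < π p := by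
  rw [Pattern.contains_iff_exists_strictMono]
  have h01 : (0 : Fin 3) < 1 := by decide
  have h12 : (1 : Fin 3) < 2 := by decide
  constructor
  · rintro ⟨α, hα, hπα⟩
    exact ⟨π (α 2), π (α 0), α 1, hπα h01, by simpa using hα h12,
      by simpa using hα h01, hπα h12⟩
  · rintro ⟨x, y, p, hxy, hpx, hyp, hy⟩
    refine ⟨![π.symm y, p, π.symm x], by simp [hpx, hyp], Fin.strictMono_iff_lt_succ.2 ?_⟩
    simp [Fin.forall_fin_two, p231, hxy, hy]

theorem Pattern.contains_p132_iff :
    Pattern.Contains π p132 ↔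
      ∃ x y p, x < y ∧ π.symm x < p ∧ p < π.symm y ∧ y < π p := by
  rw [Pattern.contains_iff_exists_strictMono]
  have h01 : (0 : Fin 3) < 1 := by decide
  have h12 : (1 : Fin 3) < 2 := by decide
  constructor
  · rintro ⟨α, hα, hπα⟩
    exact ⟨π (α 0), π (α 2), α 1, hπα h01, by simpa using hα h01,
      by simpa using hα h12, hπα h12⟩
  · rintro ⟨x, y, p, hxy, hxp, hpy, hy⟩
    refine ⟨![π.symm x, p, π.symm y], by simp [hxp, hpy], Fin.strictMono_iff_lt_succ.2 ?_⟩
    simp [Fin.forall_fin_two, p132, hxy, hy]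

end Patterns

section SeparatedPairs

variable {n : ℕ} (π : Equiv.Perm (Fin n))

theorem upSepPair_iff_exists_covBy (a : Fin n) :
    UpSepPair π a ↔ ∃ b p, a ⋖ b ∧ π.symm a < p ∧ p < π.symm b ∧ b < π p := by
  constructor
  · rintro ⟨hb, -, p, hap, hpb, hp⟩
    exact ⟨⟨a + 1, hb⟩, p, by simp, hap, hpb, hp⟩
  · rintro ⟨⟨b, hb⟩, p, hab, hap, hpb, hp⟩
    obtain rfl : (a : ℕ) + 1 = b := by simpa using hab
    exact ⟨hb, hap.trans hpb, p, hap, hpb, hp⟩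

theorem downSepPair_iff_exists_covBy (a : Fin n) :
    DownSepPair π a ↔ ∃ b p, a ⋖ b ∧ p < π.symm a ∧ π.symm b < p ∧ b < π p := by
  constructor
  · rintro ⟨hb, -, p, hbp, hpa, hp⟩
    exact ⟨⟨a + 1, hb⟩, p, by simp, hpa, hbp, hp⟩
  · rintro ⟨⟨b, hb⟩, p, hab, hpa, hbp, hp⟩
    obtain rfl : (a : ℕ) + 1 = b := by simpa using hab
    exact ⟨hb, hbp.trans hpa, p, hbp, hpa, hp⟩

end SeparatedPairs

/-- `π` contains 231 iff it has a down oriented separated pair, and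
contains 132 iff it has an up oriented separated pair. -/
theorem contains_iff_sep_pair {n : ℕ} (π : Equiv.Perm (Fin n)) :
    (Pattern.Contains π p231 ↔ ∃ a : Fin n, DownSepPair π a) ∧
    (Pattern.Contains π p132 ↔ ∃ a : Fin n, UpSepPair π a) := by
  simp only [Pattern.contains_p231_iff, Pattern.contains_p132_iff, downSepPair_iff_exists_covBy,
    upSepPair_iff_exists_covBy]
  exact ⟨exists_lt_straddling_iff_exists_covBy (OrderDual.ofDual.trans π),
    exists_lt_straddling_iff_exists_covBy π⟩
end

section
/- If σ and τ are permutations and σ is contained in τ, then t_rev(σ) ≤ t_rev(τ). Consequently, for every t ≥ 0 the set of permutations with rev-tier at most t is closed downward under pattern containment, i.e., it is a permutation class. -/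
/-!
An occurrence of `σ` in `τ` induces a strictly increasing map `g` from the values of `σ` to those
of `τ`. Let `(a, a + 1)` be an up oriented separated pair of `σ`, and let `q` be the position in
`τ` corresponding to a larger entry between the two. In `τ` the value `g a` lies left of `q`, the
value `g (a + 1)` lies right of it, and `τ q` exceeds both. Counting up from `g a` to `g (a + 1)`,
some step `c → c + 1` jumps from the left of `q` to its right, so `(c, c + 1)` is an up oriented
separated pair of `τ` with `g a ≤ c < g (a + 1)`. Down oriented pairs are the up oriented pairs of
the reversal. For `a < b` the values `c`, `d` so found satisfy `c < g (a + 1) ≤ g b ≤ d`, so an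
alternating chain of `σ` is carried to one of `τ` of the same length and the same orientations.
-/

lemma exists_mem_Ico_and_not_succ {P : ℕ → Prop} {a b : ℕ} (hab : a ≤ b) (ha : P a)
    (hb : ¬ P b) : ∃ c ∈ Set.Ico a b, P c ∧ ¬ P (c + 1) := by
  by_contra! h
  exact Nat.decreasingInduction' (P := fun c => ¬ P c)
    (fun c hcb hac hsucc hc => hsucc (h c ⟨hac, hcb⟩ hc)) hab hb ha

section SeparatedPairs

variable {n : ℕ} {τ : Equiv.Perm (Fin n)} {a b q : Fin n}

lemma exists_upSepPair_mem_Ico (hab : a ≤ b) (haq : τ.symm a < q) (hqb : q < τ.symm b)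
    (hq : b < τ q) : ∃ c ∈ Set.Ico a b, UpSepPair τ c := by
  obtain ⟨c, ⟨hac, hcb⟩, ⟨hcn, hleft⟩, hnot_left⟩ :=
    exists_mem_Ico_and_not_succ (P := fun v => ∃ hv : v < n, τ.symm ⟨v, hv⟩ < q)
      hab ⟨a.isLt, haq⟩ (fun ⟨_, hbq⟩ => hbq.asymm hqb)
  have hc : c + 1 < n := by omega
  have hlt : (⟨c + 1, hc⟩ : Fin n) < τ q := lt_of_le_of_lt (b := b) hcb hq
  have hne : q ≠ τ.symm ⟨c + 1, hc⟩ := fun h => hlt.ne' (τ.eq_symm_apply.1 h)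
  have hright : q < τ.symm ⟨c + 1, hc⟩ :=
    lt_of_le_of_ne (not_lt.1 fun h => hnot_left ⟨hc, h⟩) hne
  exact ⟨⟨c, hcn⟩, ⟨hac, hcb⟩, hc, hleft.trans hright, q, hleft, hright, hlt⟩

lemma revP_apply (i : Fin n) : revP τ i = τ i.rev := rfl

lemma revP_symm_apply (v : Fin n) : (revP τ).symm v = (τ.symm v).rev := rfl

lemma upSepPair_revP : UpSepPair (revP τ) a ↔ DownSepPair τ a := by
  simp only [UpSepPair, DownSepPair, revP_symm_apply, revP_apply, Fin.rev_lt_rev]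
  refine exists_congr fun _ => and_congr_right fun _ => ?_
  rw [← Fin.revPerm.exists_congr_right]
  simp only [Fin.revPerm_apply, Fin.rev_rev, Fin.rev_lt_rev, and_left_comm]

end SeparatedPairs

/-- `α` lists, in increasing order, the positions of an occurrence of the pattern `σ` in `τ`;
`Pattern.Contains τ σ` asserts that such an `α` exists. -/
structure IsOccurrence {m n : ℕ} (σ : Equiv.Perm (Fin m)) (τ : Equiv.Perm (Fin n))
    (α : Fin m → Fin n) : Prop where
  strictMono : StrictMono α
  lt_iff_lt : ∀ i j, τ (α i) < τ (α j) ↔ σ i < σ j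

/-- The map on values induced by a map `α` from the positions of `σ` to those of `τ`: the entry of
`σ` with value `v` is sent to the value of the entry of `τ` that `α` matches with it. -/
def valueMap {m n : ℕ} (σ : Equiv.Perm (Fin m)) (τ : Equiv.Perm (Fin n)) (α : Fin m → Fin n)
    (v : Fin m) : Fin n :=
  τ (α (σ.symm v))

section Occurrences

variable {m n : ℕ} {σ : Equiv.Perm (Fin m)} {τ : Equiv.Perm (Fin n)} {α : Fin m → Fin n}
  {a : Fin m}

lemma symm_valueMap (v : Fin m) : τ.symm (valueMap σ τ α v) = α (σ.symm v) :=
  τ.symm_apply_apply _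

lemma valueMap_revP :
    valueMap (revP σ) (revP τ) (Fin.rev ∘ α ∘ Fin.rev) = valueMap σ τ α := by
  ext v
  simp only [valueMap, revP_apply, revP_symm_apply, Function.comp_apply, Fin.rev_rev]

namespace IsOccurrence

lemma revP (h : IsOccurrence σ τ α) :
    IsOccurrence (revP σ) (revP τ) (Fin.rev ∘ α ∘ Fin.rev) where
  strictMono := Fin.rev_strictAnti.comp (h.strictMono.comp_strictAnti Fin.rev_strictAnti)
  lt_iff_lt i j := by
    simpa only [revP_apply, Function.comp_apply, Fin.rev_rev] using h.lt_iff_lt i.rev j.rev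

lemma valueMap_lt_apply_iff (h : IsOccurrence σ τ α) {v p : Fin m} :
    valueMap σ τ α v < τ (α p) ↔ v < σ p := by
  rw [valueMap, h.lt_iff_lt, σ.apply_symm_apply]

lemma strictMono_valueMap (h : IsOccurrence σ τ α) : StrictMono (valueMap σ τ α) :=
  fun v w hvw => h.valueMap_lt_apply_iff.2 (by rwa [σ.apply_symm_apply])

lemma exists_upSepPair (h : IsOccurrence σ τ α) (ha : UpSepPair σ a) :
    ∃ c, UpSepPair τ c ∧ valueMap σ τ α a ≤ c ∧ ∀ b > a, c < valueMap σ τ α b := by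
  obtain ⟨ha_lt, -, p, hap, hpa, hp⟩ := ha
  have hmono := h.strictMono_valueMap.monotone
  obtain ⟨c, ⟨hac, hca⟩, hc⟩ :=
    exists_upSepPair_mem_Ico (τ := τ) (q := α p)
      (hmono (show a ≤ ⟨a + 1, ha_lt⟩ from Nat.le_succ a))
      (by rw [symm_valueMap]; exact h.strictMono hap)
      (by rw [symm_valueMap]; exact h.strictMono hpa)
      (h.valueMap_lt_apply_iff.2 hp)
  exact ⟨c, hc, hac, fun b hab => hca.trans_le (hmono (Nat.succ_le_of_lt hab))⟩

lemma exists_downSepPair (h : IsOccurrence σ τ α) (ha : DownSepPair σ a) :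
    ∃ c, DownSepPair τ c ∧ valueMap σ τ α a ≤ c ∧ ∀ b > a, c < valueMap σ τ α b := by
  simpa only [upSepPair_revP, valueMap_revP] using h.revP.exists_upSepPair (upSepPair_revP.2 ha)

lemma exists_altChain (h : IsOccurrence σ τ α) {firstDown : Bool} {t : ℕ} {f : Fin t → Fin m}
    (hf : AltChain σ firstDown f) : ∃ f' : Fin t → Fin n, AltChain τ firstDown f' := by
  obtain ⟨hf_mono, hf_sep⟩ := hf
  have hlift : ∀ j : Fin t, ∃ c,
      (if (j : ℕ) % 2 = 0 ↔ firstDown = true then DownSepPair τ c else UpSepPair τ c) ∧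
      valueMap σ τ α (f j) ≤ c ∧ ∀ b > f j, c < valueMap σ τ α b := by
    intro j
    have hj := hf_sep j
    split_ifs at hj ⊢
    · exact h.exists_downSepPair hj
    · exact h.exists_upSepPair hj
  choose f' hsep hle hlt using hlift
  exact ⟨f', fun i j hij => (hlt i (f j) (hf_mono hij)).trans_le (hle j), hsep⟩

end IsOccurrence

end Occurrences

section RevTier

variable {m n : ℕ} {σ : Equiv.Perm (Fin m)} {τ : Equiv.Perm (Fin n)}

lemma AltChain.length_le {firstDown : Bool} {t : ℕ} {f : Fin t → Fin n}
    (hf : AltChain τ firstDown f) : t ≤ n :=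
  Fin.le_of_injective f hf.1.injective

lemma altChain_elim0 (firstDown : Bool) : AltChain τ firstDown (Fin.elim0 : Fin 0 → Fin n) :=
  ⟨fun i => i.elim0, fun j => j.elim0⟩

lemma AltChain.le_revTier {t : ℕ} {f : Fin t → Fin n} (hf : AltChain τ true f) :
    t ≤ revTier τ :=
  le_csSup ⟨n, fun _ ⟨_, hg⟩ => hg.length_le⟩ ⟨f, hf⟩

lemma revTier_le_of_contains (h : Pattern.Contains τ σ) : revTier σ ≤ revTier τ := by
  obtain ⟨α, hα_mono, hα_lt⟩ := h
  have hα : IsOccurrence σ τ α := ⟨hα_mono, hα_lt⟩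
  refine csSup_le ⟨0, Fin.elim0, altChain_elim0 true⟩ ?_
  rintro t ⟨f, hf⟩
  obtain ⟨f', hf'⟩ := hα.exists_altChain hf
  exact hf'.le_revTier

end RevTier

/-- rev-tier is monotone under pattern containment, so for each `t` the
permutations of rev-tier at most `t` form a permutation class (downward closed set). -/
theorem revTier_monotone_and_class :
    (∀ {m n : ℕ} (σ : Equiv.Perm (Fin m)) (τ : Equiv.Perm (Fin n)),
      Pattern.Contains τ σ → revTier σ ≤ revTier τ) ∧
    (∀ (t : ℕ) {m n : ℕ} (σ : Equiv.Perm (Fin m)) (τ : Equiv.Perm (Fin n)),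
      Pattern.Contains τ σ → revTier τ ≤ t → revTier σ ≤ t) := by
  exact ⟨fun _ _ h => revTier_le_of_contains h,
    fun _ _ _ _ _ h ht => (revTier_le_of_contains h).trans ht⟩
end

section
/- For every t ≥ 0, the set of permutations σ with t_rev(σ) ≥ t+1 all of whose proper subpermutations have rev-tier at most t (i.e., the basis B_t of the class of (t+1)-reverse-pass sortable permutations) is a finite set. -/
/-!
A separated pair is witnessed by three entries: the two entries of the pair and a larger one
between them. Any pattern that retains these three entries retains the pair, because two entries
with consecutive values stay consecutive when other entries are deleted. Retaining the witnesses of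
an alternating chain of `t + 1` separated pairs thus gives a pattern of length at most `3 * (t + 1)`
and rev-tier at least `t + 1`, so by minimality no basis element is longer than `3 * (t + 1)`.
-/

section Occurrences

/-- The positions `α` carry an occurrence of the pattern `τ` in `σ`, so that
`Pattern.Contains σ τ` says that such an `α` exists. -/
structure IsOccurrence_s5 {n m : ℕ} (σ : Equiv.Perm (Fin n)) (τ : Equiv.Perm (Fin m))
    (α : Fin m → Fin n) : Prop where
  strictMono : StrictMono α
  lt_iff_lt : ∀ i j : Fin m, σ (α i) < σ (α j) ↔ τ i < τ j

theorem exists_perm_lt_iff_lt {m : ℕ} {β : Type*} [LinearOrder β] {f : Fin m → β}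
    (hf : Function.Injective f) : ∃ τ : Equiv.Perm (Fin m), ∀ i j, f i < f j ↔ τ i < τ j := by
  have hsorted : StrictMono (f ∘ Tuple.sort f) :=
    (Tuple.monotone_sort f).strictMono_of_injective (hf.comp (Tuple.sort f).injective)
  exact ⟨(Tuple.sort f).symm, fun i j => by simp [← hsorted.lt_iff_lt]⟩

variable {n m : ℕ} {σ : Equiv.Perm (Fin n)} {τ : Equiv.Perm (Fin m)} {α : Fin m → Fin n}

theorem exists_isOccurrence (σ : Equiv.Perm (Fin n)) (hα : StrictMono α) :
    ∃ τ : Equiv.Perm (Fin m), IsOccurrence_s5 σ τ α :=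
  (exists_perm_lt_iff_lt (σ.injective.comp hα.injective)).imp fun _ hτ => ⟨hα, hτ⟩

theorem IsOccurrence_s5.covBy (h : IsOccurrence_s5 σ τ α) {i j : Fin m}
    (hij : σ (α i) ⋖ σ (α j)) : τ i ⋖ τ j := by
  refine ⟨(h.lt_iff_lt i j).1 hij.lt, fun c hic hcj => ?_⟩
  obtain ⟨k, rfl⟩ := τ.surjective c
  exact hij.2 ((h.lt_iff_lt i k).2 hic) ((h.lt_iff_lt k j).2 hcj)

end Occurrences

section SeparationWitnesses

/-- The entries of `σ` at positions `u`, `p`, `v` witness a separated pair: `σ u` and `σ v` are the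
lower and the upper entry of the pair, and `σ p` separates them. Both orientations are covered: the
pair is up oriented if `u < v` and down oriented if `v < u`. -/
structure IsSepWitness {n : ℕ} (σ : Equiv.Perm (Fin n)) (u p v : Fin n) : Prop where
  covBy : σ u ⋖ σ v
  lt : σ v < σ p
  between : p ∈ Set.uIoo u v

variable {n m : ℕ} {σ : Equiv.Perm (Fin n)}

theorem covBy_iff_exists_eq_mk {a b : Fin n} :
    a ⋖ b ↔ ∃ hb : (a : ℕ) + 1 < n, b = ⟨a + 1, hb⟩ := by
  rw [Fin.covBy_iff, Order.covBy_iff_add_one_eq]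
  exact ⟨fun h => ⟨h ▸ b.isLt, Fin.ext h.symm⟩, fun ⟨_, h⟩ => h ▸ rfl⟩

theorem exists_isSepWitness_iff {a : Fin n} (r : Fin n → Fin n → Prop) :
    (∃ u p v, IsSepWitness σ u p v ∧ σ u = a ∧ r u v) ↔
      ∃ hb : (a : ℕ) + 1 < n, r (σ.symm a) (σ.symm ⟨a + 1, hb⟩) ∧
        ∃ p ∈ Set.uIoo (σ.symm a) (σ.symm ⟨a + 1, hb⟩), (a : ℕ) + 1 < σ p := by
  constructor
  · rintro ⟨u, p, v, ⟨hcov, hlt, hp⟩, rfl, huv⟩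
    obtain ⟨hb, hv⟩ := covBy_iff_exists_eq_mk.1 hcov
    refine ⟨hb, ?_⟩
    simp only [← hv, Equiv.symm_apply_apply]
    exact ⟨huv, p, hp, by rwa [hv] at hlt⟩
  · rintro ⟨hb, huv, p, hp, hlt⟩
    refine ⟨σ.symm a, p, σ.symm ⟨a + 1, hb⟩, ⟨?_, ?_, hp⟩, σ.apply_symm_apply a, huv⟩
    · simpa only [Equiv.apply_symm_apply] using covBy_iff_exists_eq_mk.2 ⟨hb, rfl⟩
    · simpa only [Equiv.apply_symm_apply, Fin.lt_def] using hlt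

theorem upSepPair_iff_exists_isSepWitness {a : Fin n} :
    UpSepPair σ a ↔ ∃ u p v, IsSepWitness σ u p v ∧ σ u = a ∧ u < v := by
  rw [exists_isSepWitness_iff (· < ·), UpSepPair]
  refine exists_congr fun _ => and_congr_right fun huv => ?_
  simp only [Set.uIoo_of_lt huv, Set.mem_Ioo, and_assoc]

theorem downSepPair_iff_exists_isSepWitness {a : Fin n} :
    DownSepPair σ a ↔ ∃ u p v, IsSepWitness σ u p v ∧ σ u = a ∧ v < u := by
  rw [exists_isSepWitness_iff (· > ·), DownSepPair]
  refine exists_congr fun _ => and_congr_right fun hvu => ?_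
  simp only [Set.uIoo_of_gt hvu, Set.mem_Ioo, and_assoc]

theorem IsOccurrence_s5.isSepWitness {τ : Equiv.Perm (Fin m)} {α : Fin m → Fin n}
    (h : IsOccurrence_s5 σ τ α) {u p v : Fin m} (hw : IsSepWitness σ (α u) (α p) (α v)) :
    IsSepWitness τ u p v where
  covBy := h.covBy hw.covBy
  lt := (h.lt_iff_lt v p).1 hw.lt
  between := by
    simpa only [Set.uIoo, ← h.strictMono.monotone.map_inf, ← h.strictMono.monotone.map_sup,
      Set.mem_Ioo, h.strictMono.lt_iff_lt] using hw.between

end SeparationWitnesses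

section AlternatingChains

variable {n t : ℕ} {σ : Equiv.Perm (Fin n)} {b : Bool}

theorem altChain_iff_exists_isSepWitness {f : Fin t → Fin n} :
    AltChain σ b f ↔ StrictMono f ∧ ∀ j : Fin t, ∃ u p v, IsSepWitness σ u p v ∧ σ u = f j ∧
      if ((j : ℕ) % 2 = 0) ↔ (b = true) then v < u else u < v := by
  refine and_congr_right fun _ => forall_congr' fun j => ?_
  split_ifs
  · exact downSepPair_iff_exists_isSepWitness
  · exact upSepPair_iff_exists_isSepWitness

theorem AltChain.exists_support {f : Fin t → Fin n} (hf : AltChain σ b f) :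
    ∃ S : Finset (Fin n), S.card ≤ 3 * t ∧
      ∀ {m : ℕ} {τ : Equiv.Perm (Fin m)} {α : Fin m → Fin n}, IsOccurrence_s5 σ τ α →
        (S : Set (Fin n)) ⊆ Set.range α → ∃ g : Fin t → Fin m, AltChain τ b g := by
  obtain ⟨hmono, hwit⟩ := altChain_iff_exists_isSepWitness.1 hf
  choose u p v hw hu horient using hwit
  let S := Finset.univ.biUnion fun j => {u j, p j, v j}
  have hcard : S.card ≤ 3 * t := by
    simpa [mul_comm] using Finset.card_biUnion_le_card_mul Finset.univ
      (fun j => {u j, p j, v j}) 3 fun _ _ => Finset.card_le_three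
  refine ⟨S, hcard, fun {m τ α} hα hS => ?_⟩
  have hrange (j : Fin t) {x : Fin n} (hx : x ∈ ({u j, p j, v j} : Finset (Fin n))) :
      ∃ x', α x' = x :=
    hS (Finset.mem_coe.2 (Finset.mem_biUnion.2 ⟨j, Finset.mem_univ j, hx⟩))
  choose u' hu' using fun j => hrange j (x := u j) (by simp)
  choose p' hp' using fun j => hrange j (x := p j) (by simp)
  choose v' hv' using fun j => hrange j (x := v j) (by simp)
  refine ⟨fun j => τ (u' j), altChain_iff_exists_isSepWitness.2 ⟨fun i j hij => ?_, fun j =>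
    ⟨u' j, p' j, v' j, hα.isSepWitness ?_, rfl, ?_⟩⟩⟩
  · rw [← hα.lt_iff_lt, hu', hu', hu, hu]
    exact hmono hij
  · rw [hu', hp', hv']
    exact hw j
  · simpa only [← hα.strictMono.lt_iff_lt, hu', hv'] using horient j

theorem AltChain.exists_contains_length_le {f : Fin t → Fin n} (hf : AltChain σ b f) :
    ∃ m ≤ 3 * t, ∃ τ : Equiv.Perm (Fin m),
      Pattern.Contains σ τ ∧ ∃ g : Fin t → Fin m, AltChain τ b g := by
  obtain ⟨S, hcard, hS⟩ := hf.exists_support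
  obtain ⟨τ, hτ⟩ := exists_isOccurrence σ (S.orderEmbOfFin rfl).strictMono
  exact ⟨S.card, hcard, τ, ⟨_, hτ.strictMono, hτ.lt_iff_lt⟩,
    hS hτ (S.range_orderEmbOfFin rfl).superset⟩

end AlternatingChains

section RevTier

variable {n t : ℕ} {σ : Equiv.Perm (Fin n)}

theorem bddAbove_setOf_exists_altChain (σ : Equiv.Perm (Fin n)) (b : Bool) :
    BddAbove {t : ℕ | ∃ f : Fin t → Fin n, AltChain σ b f} := by
  refine ⟨n, ?_⟩
  rintro t ⟨f, hf, -⟩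
  simpa only [Fintype.card_fin] using Fintype.card_le_of_injective f hf.injective

theorem le_revTier_iff : t ≤ revTier σ ↔ ∃ f : Fin t → Fin n, AltChain σ true f := by
  refine ⟨fun h => ?_, fun h => le_csSup (bddAbove_setOf_exists_altChain σ true) h⟩
  have hne : {t : ℕ | ∃ f : Fin t → Fin n, AltChain σ true f}.Nonempty :=
    ⟨0, Fin.elim0, fun i => i.elim0, fun i => i.elim0⟩
  obtain ⟨f, hmono, hf⟩ := Nat.sSup_mem hne (bddAbove_setOf_exists_altChain σ true)
  exact ⟨f ∘ Fin.castLE h, hmono.comp (Fin.strictMono_castLE h), fun j => hf (Fin.castLE h j)⟩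

theorem exists_contains_length_le_of_le_revTier (h : t ≤ revTier σ) :
    ∃ m ≤ 3 * t, ∃ τ : Equiv.Perm (Fin m), Pattern.Contains σ τ ∧ t ≤ revTier τ := by
  obtain ⟨f, hf⟩ := le_revTier_iff.1 h
  obtain ⟨m, hm, τ, hτ, hg⟩ := hf.exists_contains_length_le
  exact ⟨m, hm, τ, hτ, le_revTier_iff.2 hg⟩

theorem IsBasisElt.length_le (h : IsBasisElt t σ) : n ≤ 3 * (t + 1) := by
  obtain ⟨m, hm, τ, hτ, hge⟩ := exists_contains_length_le_of_le_revTier h.1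
  by_contra! hlt
  exact Nat.not_succ_le_self t (hge.trans (h.2 m τ (hm.trans_lt hlt) hτ))

end RevTier

/-- the basis `B_t` of the class of `(t+1)`-reverse-pass sortable
permutations is finite. -/
theorem basis_finite (t : ℕ) :
    {p : (n : ℕ) × Equiv.Perm (Fin n) | IsBasisElt t p.2}.Finite := by
  refine ((Finset.Iic (3 * (t + 1))).sigma fun n =>
    (Finset.univ : Finset (Equiv.Perm (Fin n)))).finite_toSet.subset ?_
  rintro ⟨n, σ⟩ hσ
  simpa using IsBasisElt.length_le hσ
end
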